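/- For all integers n ≥ 1 and 1 ≤ l ≤ n, the number of permutations σ of {1, …, n} having exactly l cycles is at most 2 · n · n! · 2^{−l}. -/

import Mathlib

/-!
Count the pairs `(σ, f)` where `f` is a coloring of a finite type `α` by `k` colors that is
invariant under the permutation `σ`. A coloring is `σ`-invariant exactly when it is constant on
the cycles of `σ`, so `σ` contributes `k ^ (number of cycles of σ)` pairs. By Burnside's lemma the
total is `|α|!` times the number of colorings up to permutation, that is, the number of multisets
of `|α|` colors. The permutations with `l` cycles contribute `k ^ l` each, which bounds their
number; for two colors there are `|α| + 1` multisets.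
-/

open Equiv Equiv.Perm
open scoped Nat

section Cycles

variable {α : Type*}

/-- The number of cycles of a permutation, counted as its orbits, so that fixed points are
included. It is `0` by convention if there are infinitely many orbits. -/
noncomputable def numCycles (σ : Perm α) : ℕ :=
  Nat.card (Quotient (SameCycle.setoid σ))

section CycleLabel

variable [Fintype α] [DecidableEq α]

/-- The cycle through `x`, encoded as a cycle factor of `σ` if `x` is moved and as `x` itself if it
is fixed. This relates orbits to the nontrivial cycles that `Equiv.Perm.cycleType` records. -/
def cycleLabel (σ : Perm α) (x : α) : σ.cycleFactorsFinset ⊕ {x // σ x = x} :=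
  if hx : σ x = x then .inr ⟨x, hx⟩
  else .inl ⟨σ.cycleOf x, cycleOf_mem_cycleFactorsFinset_iff.2 (mem_support.2 hx)⟩

theorem cycleLabel_eq_cycleLabel_iff {σ : Perm α} {x y : α} :
    cycleLabel σ x = cycleLabel σ y ↔ σ.SameCycle x y := by
  by_cases hx : σ x = x <;> by_cases hy : σ y = y
  · simpa [cycleLabel, hx, hy] using
      (⟨fun h => h ▸ .refl σ x, fun h => h.eq_of_left hx⟩ : x = y ↔ σ.SameCycle x y)
  · simpa [cycleLabel, hx, hy] using fun h : σ.SameCycle x y => hy (h.apply_eq_self_iff.1 hx)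
  · simpa [cycleLabel, hx, hy] using fun h : σ.SameCycle x y => hx (h.apply_eq_self_iff.2 hy)
  · simpa [cycleLabel, hx, hy] using
      (sameCycle_iff_cycleOf_eq_of_mem_support (mem_support.2 hx) (mem_support.2 hy)).symm

theorem cycleLabel_surjective (σ : Perm α) : Function.Surjective (cycleLabel σ) := by
  rintro (⟨c, hc⟩ | ⟨x, hx⟩)
  · obtain ⟨x, hxc⟩ := (mem_cycleFactorsFinset_iff.1 hc).1.nonempty_support
    have hx : σ x ≠ x := mem_support.1 (mem_cycleFactorsFinset_support_le hc hxc)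
    exact ⟨x, by simp [cycleLabel, hx, cycle_is_cycleOf hxc hc]⟩
  · exact ⟨x, dif_pos hx⟩

theorem numCycles_eq_card_cycleType_add (σ : Perm α) :
    numCycles σ = σ.cycleType.card + (Finset.univ.filter fun x => σ x = x).card := by
  have hker : SameCycle.setoid σ = Setoid.ker (cycleLabel σ) :=
    Setoid.ext fun _ _ => cycleLabel_eq_cycleLabel_iff.symm
  rw [numCycles, hker,
    Nat.card_congr (Setoid.quotientKerEquivOfSurjective _ (cycleLabel_surjective σ)),
    Nat.card_sum, cycleType_def]
  simp [Fintype.card_subtype]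

end CycleLabel

theorem comp_eq_self_iff_setoid_le_ker {ι : Type*} {σ : Perm α} {f : α → ι} :
    f ∘ σ = f ↔ SameCycle.setoid σ ≤ Setoid.ker f := by
  constructor
  · rintro hf x _ ⟨m, rfl⟩
    have hm : (DomMulAct.mk σ) ^ m ∈ MulAction.stabilizer (Perm α)ᵈᵐᵃ f :=
      zpow_mem (DomMulAct.mem_stabilizer_iff.2 hf) m
    exact (congrFun (DomMulAct.mem_stabilizer_iff.1 hm) x).symm
  · exact fun hf => funext fun x => hf (sameCycle_apply_left.2 (SameCycle.refl σ x))

theorem card_comp_eq_self_eq_pow_numCycles [Finite α] (ι : Type*) (σ : Perm α) :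
    Nat.card {f : α → ι // f ∘ σ = f} = Nat.card ι ^ numCycles σ := by
  rw [numCycles, ← Nat.card_fun]
  exact Nat.card_congr <|
    (Equiv.subtypeEquivRight fun _ => comp_eq_self_iff_setoid_le_ker).trans (Setoid.liftEquiv _)

end Cycles

section Colorings

variable {α ι : Type*} [Fintype α]

theorem exists_perm_comp_eq_iff_map_univ_eq {f g : α → ι} :
    (∃ σ : Perm α, g ∘ σ = f) ↔ Finset.univ.val.map f = Finset.univ.val.map g := by
  classical
  constructor
  · rintro ⟨σ, rfl⟩
    rw [← Multiset.map_map, Multiset.map_univ_val_equiv]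
  · intro h
    have hfiber (c : ι) : Nonempty ({a // f a = c} ≃ {a // g a = c}) := by
      have hc := congrArg (Multiset.count c) h
      refine Fintype.card_eq.1 ?_
      simpa [Multiset.count_map, Fintype.card_subtype, Finset.card_def, eq_comm] using hc
    exact ⟨Equiv.ofFiberEquiv fun c => (hfiber c).some,
      funext fun a => Equiv.ofFiberEquiv_map _ a⟩

variable (α) in
/-- The multiset of colors of a coloring, as an element of the symmetric power indexed by the
number of colored points. -/
def colorMultiset (f : α → ι) : Sym ι (Fintype.card α) :=
  ⟨Finset.univ.val.map f, by simp⟩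

theorem colorMultiset_surjective :
    Function.Surjective (colorMultiset α : (α → ι) → Sym ι (Fintype.card α)) := by
  intro s
  classical
  have e : α ≃ (s : Multiset ι) := Fintype.equivOfCardEq (by simp)
  refine ⟨fun a => (e a).1, Sym.coe_injective ?_⟩
  calc Finset.univ.val.map (fun a => (e a).1)
      = (Finset.univ.val.map e).map (fun c : (s : Multiset ι) => c.1) :=
        (Multiset.map_map _ _ _).symm
    _ = Finset.univ.val.map fun c : (s : Multiset ι) => c.1 := by
        rw [Multiset.map_univ_val_equiv]
    _ = s := Multiset.map_univ_coe _

theorem orbitRel_colorings_eq_ker :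
    MulAction.orbitRel (Perm α)ᵈᵐᵃ (α → ι) = Setoid.ker (colorMultiset α) := by
  ext f g
  rw [MulAction.orbitRel_apply, MulAction.mem_orbit_iff, DomMulAct.mk.surjective.exists,
    Setoid.ker_def, ← Sym.coe_injective.eq_iff]
  exact exists_perm_comp_eq_iff_map_univ_eq

variable (α ι) in
theorem card_orbits_colorings [Fintype ι] :
    Nat.card (MulAction.orbitRel.Quotient (Perm α)ᵈᵐᵃ (α → ι)) =
      (Fintype.card ι).multichoose (Fintype.card α) := by
  classical
  rw [MulAction.orbitRel.Quotient, orbitRel_colorings_eq_ker,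
    Nat.card_congr (Setoid.quotientKerEquivOfSurjective _ colorMultiset_surjective),
    Nat.card_eq_fintype_card, Sym.card_sym_eq_multichoose]

variable (α) in
theorem sum_pow_numCycles [DecidableEq α] (k : ℕ) :
    ∑ σ : Perm α, k ^ numCycles σ = k.multichoose (Fintype.card α) * (Fintype.card α)! := by
  classical
  have : Fintype (Perm α)ᵈᵐᵃ := Fintype.ofEquiv _ DomMulAct.mk
  have burnside :=
    MulAction.sum_card_fixedBy_eq_card_orbits_mul_card_group (Perm α)ᵈᵐᵃ (α → Fin k)
  calc ∑ σ : Perm α, k ^ numCycles σ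
      = ∑ σ : Perm α, Nat.card {f : α → Fin k // f ∘ σ = f} := by
        simp only [card_comp_eq_self_eq_pow_numCycles, Nat.card_fin]
    _ = ∑ g : (Perm α)ᵈᵐᵃ, Fintype.card (MulAction.fixedBy (α → Fin k) g) := by
        refine Fintype.sum_equiv DomMulAct.mk _ _ fun σ => ?_
        exact Nat.card_eq_fintype_card (α := MulAction.fixedBy _ (DomMulAct.mk σ))
    _ = k.multichoose (Fintype.card α) * (Fintype.card α)! := by
        rw [burnside, ← Nat.card_eq_fintype_card, ← Nat.card_eq_fintype_card (α := _ᵈᵐᵃ),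
          card_orbits_colorings, ← Nat.card_congr DomMulAct.mk, Nat.card_perm,
          Nat.card_eq_fintype_card, Fintype.card_fin]

end Colorings

theorem statement17_general (α : Type*) [Fintype α] [DecidableEq α] (k l : ℕ) :
    (Finset.univ.filter fun σ : Perm α => numCycles σ = l).card * k ^ l ≤
      k.multichoose (Fintype.card α) * (Fintype.card α)! :=
  calc (Finset.univ.filter fun σ : Perm α => numCycles σ = l).card * k ^ l
      = ∑ σ : Perm α with numCycles σ = l, k ^ numCycles σ :=
        (Finset.sum_const_nat fun σ hσ => by rw [(Finset.mem_filter.1 hσ).2]).symm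
    _ ≤ ∑ σ : Perm α, k ^ numCycles σ := Finset.sum_le_sum_of_subset (Finset.filter_subset _ _)
    _ = k.multichoose (Fintype.card α) * (Fintype.card α)! := sum_pow_numCycles α k

/-- Lemma 3.4: the number of permutations of `{1, …, n}` with exactly `l` cycles
(fixed points counted as cycles) is at most `2 · n · n! · 2^{-l}`. -/
theorem statement17 (n : ℕ) (hn : 1 ≤ n) (l : ℕ) (hl1 : 1 ≤ l) (hln : l ≤ n) :
    ((Finset.univ.filter fun σ : Equiv.Perm (Fin n) =>
        σ.cycleType.card + (Finset.univ.filter fun x => σ x = x).card = l).card : ℝ) ≤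
      2 * (n : ℝ) * (n.factorial : ℝ) / 2 ^ l := by
  rw [le_div_iff₀ (by positivity)]
  have h := statement17_general (Fin n) 2 l
  simp only [numCycles_eq_card_cycleType_add, Nat.multichoose_two, Fintype.card_fin] at h
  exact_mod_cast h.trans (Nat.mul_le_mul_right _ (by lia : n + 1 ≤ 2 * n))
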